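/- Let S = {V ∈ ℂ^{4×4} : Vᵀ = −V and V * V = 0}, a cone in the 6-dimensional space of antisymmetric matrices. For each d ≥ 1, the complex vector space of functions S → ℂ obtained by restricting homogeneous degree-d polynomials in the six entries V01, V02, V03, V12, V13, V23 to S has dimension 4d + 2 (and dimension 1 for d = 0). Equivalently, the space of homogeneous degree-d polynomials in six variables vanishing identically on S has dimension C(d+5, 5) − (4d + 2) for d ≥ 1. -/

import Mathlib

/-!
An antisymmetric `4 × 4` matrix is the sum of its self-dual and anti-self-dual parts, which are
vectors in `ℂ³`. The square of `V` is zero only if all products of a coordinate of one part with a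
coordinate of the other vanish, so one part is zero; the square of a matrix with one part zero is a
scalar, which vanishes exactly on a quadric cone. Hence the branch is the union of two cones
`c₀ c₂ = c₁²` meeting at the origin, each parametrised by the Veronese map
`(s, t) ↦ (s², st, t²)`.

Pulled back along the two parametrisations, a form of degree `d` becomes a pair of binary forms of
degree `2d`, and the pair is zero exactly when the form vanishes on the branch. Every binary form of
degree `2d` is a form of degree `d` in `s², st, t²`, and the linear coordinates of one cone vanish
on the other; so for `d ≥ 1` every pair arises, and the dimension is `2 (2d + 1)`.
-/

open Matrix MvPolynomial

/-- The Higgs branch of SU(2) with 2 flavours: antisymmetric 4×4 complex matrices that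
square to zero. -/
def higgsBranchSU2 : Set (Matrix (Fin 4) (Fin 4) ℂ) :=
  {V | Vᵀ = -V ∧ V * V = 0}

/-- The six independent entries of an antisymmetric 4×4 matrix. -/
def entriesOf (V : Matrix (Fin 4) (Fin 4) ℂ) : Fin 6 → ℂ :=
  ![V 0 1, V 0 2, V 0 3, V 1 2, V 1 3, V 2 3]

/-- The linear map restricting a polynomial in the six entries V01, V02, V03, V12, V13,
V23 to a function on the Higgs branch. -/
noncomputable def restrictToHiggs :
    MvPolynomial (Fin 6) ℂ →ₗ[ℂ] (higgsBranchSU2 → ℂ) :=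
  LinearMap.pi fun V => (MvPolynomial.aeval (entriesOf V.1)).toLinearMap

open Module Submodule

theorem finrank_map_add_finrank_inf_ker {K M N : Type*} [DivisionRing K] [AddCommGroup M]
    [Module K M] [AddCommGroup N] [Module K N] (f : M →ₗ[K] N) (H : Submodule K M)
    [Module.Finite K H] :
    finrank K (H.map f) + finrank K ↥(H ⊓ LinearMap.ker f) = finrank K H := by
  rw [← LinearMap.finrank_range_add_finrank_ker (f.domRestrict H), LinearMap.range_domRestrict,
    LinearMap.ker_domRestrict, ← finrank_map_subtype_eq, map_comap_subtype]

theorem finrank_map_eq_of_ker_eq {R M N P : Type*} [Ring R] [AddCommGroup M] [Module R M]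
    [AddCommGroup N] [Module R N] [AddCommGroup P] [Module R P] {f : M →ₗ[R] N} {g : M →ₗ[R] P}
    (h : LinearMap.ker f = LinearMap.ker g) (H : Submodule R M) :
    finrank R (H.map f) = finrank R (H.map g) := by
  have ker_eq : LinearMap.ker (f.domRestrict H) = LinearMap.ker (g.domRestrict H) := by
    rw [LinearMap.ker_domRestrict, LinearMap.ker_domRestrict, h]
  rw [← LinearMap.range_domRestrict, ← LinearMap.range_domRestrict]
  exact ((f.domRestrict H).quotKerEquivRange.symm ≪≫ₗ quotEquivOfEq _ _ ker_eq ≪≫ₗ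
    (g.domRestrict H).quotKerEquivRange).finrank_eq

theorem finrank_submodule_pi {R ι : Type*} {M : ι → Type*} [Ring R] [StrongRankCondition R]
    [Fintype ι] [∀ i, AddCommGroup (M i)] [∀ i, Module R (M i)] (W : ∀ i, Submodule R (M i))
    [∀ i, Module.Free R (W i)] [∀ i, Module.Finite R (W i)] :
    finrank R (pi Set.univ W) = ∑ i, finrank R (W i) := by
  let e : pi Set.univ W ≃ₗ[R] ∀ i, W i :=
    { toFun w i := ⟨w.1 i, w.2 i trivial⟩
      invFun w := ⟨fun i => w i, fun i _ => (w i).2⟩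
      map_add' _ _ := rfl
      map_smul' _ _ := rfl }
  rw [e.finrank_eq, finrank_pi_fintype]

instance finite_homogeneousSubmodule (σ R : Type*) [Finite σ] [CommSemiring R] (d : ℕ) :
    Module.Finite R (homogeneousSubmodule σ R d) :=
  .of_fg (homogeneousSubmodule_fg σ R d)

theorem finrank_homogeneousSubmodule (σ R : Type*) [Fintype σ] [CommRing R] [Nontrivial R]
    (d : ℕ) :
    finrank R (homogeneousSubmodule σ R d) = (Fintype.card σ + d - 1).choose d := by
  classical
  have degree_eq : {e : σ →₀ ℕ | e.degree = d} =
      ((Finset.univ.finsuppAntidiag d : Finset (σ →₀ ℕ)) : Set (σ →₀ ℕ)) := by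
    ext e
    simp [Finsupp.degree_eq_sum]
  rw [homogeneousSubmodule_eq_finsupp_supported, degree_eq,
    (AddMonoidAlgebra.supportedEquivFinsupp _).finrank_eq, finrank_finsupp_self]
  simp [Finset.card_finsuppAntidiag_nat_eq_choose]

theorem map_aeval_homogeneousSubmodule {σ R A : Type*} [CommSemiring R] [CommSemiring A]
    [Algebra R A] (f : σ → A) (d : ℕ) :
    (homogeneousSubmodule σ R d).map (aeval f).toLinearMap = span R (Set.range f) ^ d := by
  rw [← homogeneousSubmodule_one_pow, Submodule.map_pow, homogeneousSubmodule_one_eq_span_X,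
    map_span, ← Set.range_comp]
  congr 3
  ext i
  simp

/-- The degree-two Veronese map `(s, t) ↦ (s², st, t²)`, which parametrises the quadric cone
`c₀ c₂ = c₁²`. -/
def veronese {A : Type*} [Monoid A] (s t : A) : Fin 3 → A :=
  ![s ^ 2, s * t, t ^ 2]

theorem comp_veronese {A B F : Type*} [Monoid A] [Monoid B] [FunLike F A B] [MonoidHomClass F A B]
    (f : F) (s t : A) : f ∘ veronese s t = veronese (f s) (f t) := by
  ext i
  fin_cases i <;> simp [veronese]

theorem exists_eq_veronese {K : Type*} [Field K] [IsAlgClosed K] {c : Fin 3 → K}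
    (hc : c 0 * c 2 = c 1 ^ 2) : ∃ s t, c = veronese s t := by
  obtain ⟨s, hs⟩ := IsAlgClosed.exists_pow_nat_eq (c 0) two_pos
  obtain ⟨t, ht⟩ := IsAlgClosed.exists_pow_nat_eq (c 2) two_pos
  have hst : (c 1) ^ 2 = (s * t) ^ 2 := by rw [mul_pow, hs, ht, hc]
  obtain h | h := sq_eq_sq_iff_eq_or_eq_neg.mp hst
  · exact ⟨s, t, by ext i; fin_cases i <;> simp [veronese, *]⟩
  · exact ⟨s, -t, by ext i; fin_cases i <;> simp [veronese, *]⟩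

theorem span_veronese_X (R : Type*) [CommSemiring R] :
    span R (Set.range (veronese (X 0) (X 1))) = homogeneousSubmodule (Fin 2) R 2 := by
  rw [← homogeneousSubmodule_one_pow, homogeneousSubmodule_one_eq_span_X, sq, span_mul_span]
  congr 1
  have range_X : Set.range X = {(X 0 : MvPolynomial (Fin 2) R), X 1} := by
    ext p
    simp [Fin.exists_fin_two, eq_comm]
  simp only [range_X, veronese, range_cons, range_empty, Set.insert_eq, Set.union_mul,
    Set.mul_union, Set.singleton_mul_singleton, sq]
  grind

theorem map_aeval_veronese (R : Type*) [CommSemiring R] (d : ℕ) :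
    (homogeneousSubmodule (Fin 3) R d).map (aeval (veronese (X 0) (X 1))).toLinearMap =
      homogeneousSubmodule (Fin 2) R (2 * d) := by
  rw [map_aeval_homogeneousSubmodule, span_veronese_X, ← homogeneousSubmodule_one_pow, ← pow_mul,
    homogeneousSubmodule_one_pow]

section DualPart

variable {M : Type*} [AddCommGroup M] [Module ℂ M]

/-- The self-dual (`ε = 1`) or anti-self-dual (`ε = -1`) part of the antisymmetric matrix with
entries `v = (V₀₁, V₀₂, V₀₃, V₁₂, V₁₃, V₂₃)`. It is the triple
`(x, y, z) = (V₀₁ + ε V₂₃, V₀₂ - ε V₁₃, V₀₃ + ε V₁₂)` in the null coordinates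
`(x - iy, z, -x - iy) / 4`, which turn the quadric `x² + y² + z² = 0` into `c₀ c₂ = c₁²`.
The entries lie in a module so that they may be numbers as well as polynomials. -/
noncomputable def dualPart (ε : ℤˣ) (v : Fin 6 → M) : Fin 3 → M :=
  ![(1 / 4 : ℂ) • (v 0 + ε • v 5 - Complex.I • (v 1 - ε • v 4)),
    (1 / 4 : ℂ) • (v 2 + ε • v 3),
    (1 / 4 : ℂ) • (-(v 0 + ε • v 5) - Complex.I • (v 1 - ε • v 4))]

/-- The antisymmetric matrix, given by its entries, whose part of sign `ε` is `c` and whose part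
of sign `-ε` vanishes. -/
noncomputable def ofDualPart (ε : ℤˣ) (c : Fin 3 → M) : Fin 6 → M :=
  ![c 0 - c 2, Complex.I • (c 0 + c 2), (2 : ℂ) • c 1,
    ε • (2 : ℂ) • c 1, -(ε • Complex.I • (c 0 + c 2)), ε • (c 0 - c 2)]

theorem dualPart_ofDualPart (ε : ℤˣ) (c : Fin 3 → M) : dualPart ε (ofDualPart ε c) = c := by
  ext i
  obtain rfl | rfl := Int.units_eq_one_or ε <;> fin_cases i <;>
    simp only [dualPart, ofDualPart, Fin.zero_eta, Fin.mk_one, Fin.reduceFinMk, cons_val, one_smul,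
      neg_neg, Units.neg_smul] <;>
    match_scalars <;> grind [Complex.I_mul_I]

theorem dualPart_neg_ofDualPart (ε : ℤˣ) (c : Fin 3 → M) : dualPart (-ε) (ofDualPart ε c) = 0 := by
  ext i
  obtain rfl | rfl := Int.units_eq_one_or ε <;> fin_cases i <;>
    simp only [dualPart, ofDualPart, Fin.zero_eta, Fin.mk_one, Fin.reduceFinMk, cons_val, one_smul,
      neg_neg, Units.neg_smul, Pi.zero_apply] <;>
    module

theorem ofDualPart_zero (ε : ℤˣ) : ofDualPart ε (0 : Fin 3 → M) = 0 := by
  ext i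
  fin_cases i <;> simp [ofDualPart]

theorem ofDualPart_add_ofDualPart_neg (ε : ℤˣ) (v : Fin 6 → M) :
    ofDualPart ε (dualPart ε v) + ofDualPart (-ε) (dualPart (-ε) v) = v := by
  ext i
  obtain rfl | rfl := Int.units_eq_one_or ε <;> fin_cases i <;>
    simp only [dualPart, ofDualPart, Fin.zero_eta, Fin.mk_one, Fin.reduceFinMk, cons_val, one_smul,
      neg_neg, Units.neg_smul, Pi.add_apply] <;>
    match_scalars <;> grind [Complex.I_mul_I]

variable {N F : Type*} [AddCommGroup N] [Module ℂ N] [FunLike F M N] [LinearMapClass F ℂ M N]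

theorem comp_dualPart (f : F) (ε : ℤˣ) (v : Fin 6 → M) :
    f ∘ dualPart ε v = dualPart ε (f ∘ v) := by
  ext i
  obtain rfl | rfl := Int.units_eq_one_or ε <;> fin_cases i <;> simp [dualPart]

theorem comp_ofDualPart (f : F) (ε : ℤˣ) (c : Fin 3 → M) :
    f ∘ ofDualPart ε c = ofDualPart ε (f ∘ c) := by
  ext i
  obtain rfl | rfl := Int.units_eq_one_or ε <;> fin_cases i <;> simp [ofDualPart]

theorem dualPart_mem (W : Submodule ℂ M) (ε : ℤˣ) {v : Fin 6 → M} (hv : ∀ i, v i ∈ W) (i : Fin 3) :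
    dualPart ε v i ∈ W := by
  have h := comp_dualPart W.subtype ε fun i => ⟨v i, hv i⟩
  exact congrFun h i ▸ Subtype.property _

theorem ofDualPart_mem (W : Submodule ℂ M) (ε : ℤˣ) {c : Fin 3 → M} (hc : ∀ i, c i ∈ W)
    (i : Fin 6) : ofDualPart ε c i ∈ W := by
  have h := comp_ofDualPart W.subtype ε fun i => ⟨c i, hc i⟩
  exact congrFun h i ▸ Subtype.property _

end DualPart

/-- The antisymmetric matrix with prescribed entries above the diagonal, in the order of
`entriesOf`. -/
def antisymmOf (v : Fin 6 → ℂ) : Matrix (Fin 4) (Fin 4) ℂ :=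
  !![0, v 0, v 1, v 2; -v 0, 0, v 3, v 4; -v 1, -v 3, 0, v 5; -v 2, -v 4, -v 5, 0]

theorem entriesOf_antisymmOf (v : Fin 6 → ℂ) : entriesOf (antisymmOf v) = v := by
  ext i
  fin_cases i <;> rfl

theorem transpose_antisymmOf (v : Fin 6 → ℂ) : (antisymmOf v)ᵀ = -antisymmOf v := by
  ext i j
  fin_cases i <;> fin_cases j <;> simp [antisymmOf]

theorem antisymmOf_entriesOf {V : Matrix (Fin 4) (Fin 4) ℂ} (hV : Vᵀ = -V) :
    antisymmOf (entriesOf V) = V := by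
  have antisymm i j : V j i = -V i j := congrFun₂ hV i j
  have diag i : V i i = 0 := self_eq_neg.mp (antisymm i i)
  ext i j
  fin_cases i <;> fin_cases j <;>
    first | rfl | exact (diag _).symm | exact (antisymm _ _).symm

theorem antisymmOf_ofDualPart_mul_self (ε : ℤˣ) (c : Fin 3 → ℂ) :
    antisymmOf (ofDualPart ε c) * antisymmOf (ofDualPart ε c) =
      (4 * (c 0 * c 2 - c 1 ^ 2)) • (1 : Matrix (Fin 4) (Fin 4) ℂ) := by
  ext i j
  obtain rfl | rfl := Int.units_eq_one_or ε <;> fin_cases i <;> fin_cases j <;>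
    simp [antisymmOf, ofDualPart] <;> grind [Complex.I_mul_I]

theorem vecMulVec_dualPart_eq_zero {v : Fin 6 → ℂ} (hv : antisymmOf v * antisymmOf v = 0) :
    vecMulVec (dualPart 1 v) (dualPart (-1) v) = 0 := by
  have entry i j : ∑ k, antisymmOf v i k * antisymmOf v k j = 0 := congrFun₂ hv i j
  simp only [Fin.sum_univ_four] at entry
  have h₀₀ : 0 * 0 + v 0 * -v 0 + v 1 * -v 1 + v 2 * -v 2 = 0 := entry 0 0
  have h₁₁ : -v 0 * v 0 + 0 * 0 + v 3 * -v 3 + v 4 * -v 4 = 0 := entry 1 1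
  have h₂₂ : -v 1 * v 1 + -v 3 * v 3 + 0 * 0 + v 5 * -v 5 = 0 := entry 2 2
  have h₃₃ : -v 2 * v 2 + -v 4 * v 4 + -v 5 * v 5 + 0 * 0 = 0 := entry 3 3
  have h₀₁ : 0 * v 0 + v 0 * 0 + v 1 * -v 3 + v 2 * -v 4 = 0 := entry 0 1
  have h₀₂ : 0 * v 1 + v 0 * v 3 + v 1 * 0 + v 2 * -v 5 = 0 := entry 0 2
  have h₀₃ : 0 * v 2 + v 0 * v 4 + v 1 * v 5 + v 2 * 0 = 0 := entry 0 3
  have h₁₂ : -v 0 * v 1 + 0 * v 3 + v 3 * 0 + v 4 * -v 5 = 0 := entry 1 2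
  have h₁₃ : -v 0 * v 2 + 0 * v 4 + v 3 * v 5 + v 4 * 0 = 0 := entry 1 3
  have h₂₃ : -v 1 * v 2 + -v 3 * v 4 + 0 * v 5 + v 5 * 0 = 0 := entry 2 3
  -- Each product of coordinates of the two parts is a linear combination of these ten entries.
  ext i j
  fin_cases i <;> fin_cases j <;>
    simp [dualPart, vecMulVec, -mul_eq_zero] <;> grind [Complex.I_mul_I]

theorem image_entriesOf_higgsBranchSU2 :
    entriesOf '' higgsBranchSU2 = {v | ∃ (ε : ℤˣ) (s t : ℂ), v = ofDualPart ε (veronese s t)} := by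
  ext v
  constructor
  · rintro ⟨V, ⟨antisymm, sq_zero⟩, rfl⟩
    rw [← antisymmOf_entriesOf antisymm] at sq_zero
    generalize entriesOf V = v at sq_zero
    obtain ⟨ε, hε⟩ : ∃ ε, dualPart (-ε) v = 0 := by
      by_contra! h
      exact vecMulVec_ne_zero (by simpa using h (-1)) (h 1) (vecMulVec_dualPart_eq_zero sq_zero)
    have hv : v = ofDualPart ε (dualPart ε v) := by
      simpa [hε, ofDualPart_zero] using (ofDualPart_add_ofDualPart_neg ε v).symm
    rw [hv, antisymmOf_ofDualPart_mul_self] at sq_zero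
    obtain ⟨s, t, hst⟩ := exists_eq_veronese (c := dualPart ε v) (by
      simpa [sub_eq_zero] using sq_zero)
    exact ⟨ε, s, t, hst ▸ hv⟩
  · rintro ⟨ε, s, t, rfl⟩
    refine ⟨antisymmOf (ofDualPart ε (veronese s t)), ⟨transpose_antisymmOf _, ?_⟩,
      entriesOf_antisymmOf _⟩
    rw [antisymmOf_ofDualPart_mul_self]
    simp [veronese, mul_pow]

/-- Restriction of a polynomial in the six entries to the cone of matrices whose part of sign `-ε`
vanishes, pulled back along the Veronese map to a polynomial in two variables. -/
noncomputable def conePullback (ε : ℤˣ) : MvPolynomial (Fin 6) ℂ →ₐ[ℂ] MvPolynomial (Fin 2) ℂ :=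
  aeval (ofDualPart ε (veronese (X 0) (X 1)))

/-- Restriction to both cones at once, as a pair of polynomials indexed by the sign. -/
noncomputable def conePullbacks : MvPolynomial (Fin 6) ℂ →ₗ[ℂ] ℤˣ → MvPolynomial (Fin 2) ℂ :=
  LinearMap.pi fun ε => (conePullback ε).toLinearMap

theorem aeval_conePullback (ε : ℤˣ) (x : Fin 2 → ℂ) (p : MvPolynomial (Fin 6) ℂ) :
    aeval x (conePullback ε p) = aeval (ofDualPart ε (veronese (x 0) (x 1))) p := by
  rw [conePullback, comp_aeval_apply]
  congr 2
  exact (comp_ofDualPart (aeval x) ε _).trans (by simp only [comp_veronese, aeval_X])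

theorem conePullback_eq_zero_iff (ε : ℤˣ) (p : MvPolynomial (Fin 6) ℂ) :
    conePullback ε p = 0 ↔ ∀ s t : ℂ, aeval (ofDualPart ε (veronese s t)) p = 0 := by
  constructor
  · intro h s t
    simpa [h] using (aeval_conePullback ε ![s, t] p).symm
  · intro h
    refine MvPolynomial.funext fun x => ?_
    rw [← coe_aeval_eq_eval, map_zero]
    exact (aeval_conePullback ε x p).trans (h _ _)

theorem ker_restrictToHiggs : LinearMap.ker restrictToHiggs = LinearMap.ker conePullbacks := by
  ext p
  have on_branch : restrictToHiggs p = 0 ↔ ∀ v ∈ entriesOf '' higgsBranchSU2, aeval v p = 0 := by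
    rw [Set.forall_mem_image]
    exact _root_.funext_iff.trans Subtype.forall
  have on_cones : conePullbacks p = 0 ↔ ∀ ε, conePullback ε p = 0 := _root_.funext_iff
  simp only [LinearMap.mem_ker, on_branch, on_cones, image_entriesOf_higgsBranchSU2,
    conePullback_eq_zero_iff]
  grind

theorem conePullback_isHomogeneous (ε : ℤˣ) {p : MvPolynomial (Fin 6) ℂ} {d : ℕ}
    (hp : p.IsHomogeneous d) : (conePullback ε p).IsHomogeneous (2 * d) := by
  refine hp.aeval _ (ofDualPart_mem (homogeneousSubmodule (Fin 2) ℂ 2) ε fun i => ?_)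
  rw [← span_veronese_X]
  exact subset_span ⟨i, rfl⟩

theorem conePullback_aeval_dualPart (ε ε' : ℤˣ) (p : MvPolynomial (Fin 3) ℂ) :
    conePullback ε' (aeval (dualPart ε X) p) =
      aeval (dualPart ε (ofDualPart ε' (veronese (X 0) (X 1)))) p := by
  rw [comp_aeval_apply]
  congr 2
  refine (comp_dualPart (conePullback ε') ε X).trans (congrArg _ ?_)
  ext1 i
  exact aeval_X _ i

theorem exists_conePullbacks_eq_single (ε : ℤˣ) {d : ℕ} (hd : d ≠ 0) {q : MvPolynomial (Fin 2) ℂ}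
    (hq : q.IsHomogeneous (2 * d)) :
    ∃ p : MvPolynomial (Fin 6) ℂ, p.IsHomogeneous d ∧ conePullbacks p = Pi.single ε q := by
  obtain ⟨c, hc, rfl⟩ := (map_aeval_veronese ℂ d).ge hq
  refine ⟨aeval (dualPart ε X) c, ?_, ?_⟩
  · simpa using hc.aeval _ (dualPart_mem (homogeneousSubmodule (Fin 6) ℂ 1) ε (isHomogeneous_X ℂ))
  ext1 ε'
  change conePullback ε' (aeval (dualPart ε X) c) = _
  rw [conePullback_aeval_dualPart]
  obtain rfl | h := eq_or_ne ε' ε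
  · rw [dualPart_ofDualPart, Pi.single_eq_same]
    rfl
  · have hc : c.IsHomogeneous d := hc
    rw [Pi.single_eq_of_ne h, Int.units_ne_iff_eq_neg.mp h.symm, dualPart_neg_ofDualPart,
      aeval_zero, constantCoeff_eq, hc.coeff_eq_zero (by simpa using hd.symm), map_zero]

theorem map_conePullbacks {d : ℕ} (hd : d ≠ 0) :
    (homogeneousSubmodule (Fin 6) ℂ d).map conePullbacks =
      pi Set.univ fun _ => homogeneousSubmodule (Fin 2) ℂ (2 * d) := by
  apply le_antisymm
  · rintro _ ⟨p, hp, rfl⟩ ε -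
    exact conePullback_isHomogeneous ε hp
  · intro q hq
    rw [← Finset.univ_sum_single q]
    refine sum_mem fun ε _ => ?_
    exact exists_conePullbacks_eq_single ε hd (hq ε trivial)

theorem finrank_map_conePullbacks {d : ℕ} (hd : d ≠ 0) :
    finrank ℂ ((homogeneousSubmodule (Fin 6) ℂ d).map conePullbacks) = 4 * d + 2 := by
  have choose_eq : (2 + 2 * d - 1).choose (2 * d) = 2 * d + 1 := by
    rw [show 2 + 2 * d - 1 = 2 * d + 1 by omega, Nat.choose_succ_self_right]
  rw [map_conePullbacks hd, finrank_submodule_pi]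
  simp only [finrank_homogeneousSubmodule, Fintype.card_fin, choose_eq, Finset.sum_const,
    Finset.card_univ, Fintype.card_units_int, smul_eq_mul]
  ring

theorem finrank_map_restrictToHiggs_zero :
    finrank ℂ ((homogeneousSubmodule (Fin 6) ℂ 0).map restrictToHiggs) = 1 := by
  rw [homogeneousSubmodule_zero, one_eq_span, map_span, Set.image_singleton]
  refine finrank_span_singleton fun h => ?_
  have value_at_zero := congrFun h ⟨0, by simp [higgsBranchSU2]⟩
  simp [restrictToHiggs] at value_at_zero

/-- The unrefined Hilbert series of the Higgs branch of SU(2) with 2 flavours: the space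
of functions on the branch obtained by restricting homogeneous degree-d polynomials in the
six matrix entries has dimension 1 for d = 0 and 4d + 2 for d ≥ 1; equivalently the space
of homogeneous degree-d polynomials vanishing on the branch has dimension
C(d+5,5) − (4d+2) for d ≥ 1. -/
theorem su2_higgs_hilbert_series :
    Module.finrank ℂ
        ((MvPolynomial.homogeneousSubmodule (Fin 6) ℂ 0).map restrictToHiggs) = 1 ∧
    ∀ d : ℕ, 1 ≤ d →
      Module.finrank ℂ
          ((MvPolynomial.homogeneousSubmodule (Fin 6) ℂ d).map restrictToHiggs) =
        4 * d + 2 ∧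
      Module.finrank ℂ
          ↥(MvPolynomial.homogeneousSubmodule (Fin 6) ℂ d ⊓
            LinearMap.ker restrictToHiggs) =
        Nat.choose (d + 5) 5 - (4 * d + 2) := by
  refine ⟨finrank_map_restrictToHiggs_zero, fun d hd => ?_⟩
  have rank_image : finrank ℂ ((homogeneousSubmodule (Fin 6) ℂ d).map restrictToHiggs) =
      4 * d + 2 := by
    rw [finrank_map_eq_of_ker_eq ker_restrictToHiggs, finrank_map_conePullbacks (by omega)]
  have rank_total : finrank ℂ (homogeneousSubmodule (Fin 6) ℂ d) = (d + 5).choose 5 := by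
    rw [finrank_homogeneousSubmodule, Fintype.card_fin, show 6 + d - 1 = d + 5 by omega,
      Nat.choose_symm_add]
  have rank_nullity :=
    finrank_map_add_finrank_inf_ker restrictToHiggs (homogeneousSubmodule (Fin 6) ℂ d)
  exact ⟨rank_image, by omega⟩
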